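/- Let n ≥ 2. For all 0 ≤ i ≠ j ≤ n−1, one has τ̃_{i,j}² = z in S̃_n. -/

import Mathlib

open Equiv

/-- Generator `z` as an element of the free group. -/
def zF (n : ℕ) : FreeGroup (Fin (n-1) ⊕ Unit) := FreeGroup.of (Sum.inr ())

/-- Generator `τ̃ᵢ` as an element of the free group. -/
def tF (n : ℕ) (i : Fin (n-1)) : FreeGroup (Fin (n-1) ⊕ Unit) := FreeGroup.of (Sum.inl i)

/-- Relations of the spin extension of the symmetric group. -/
def spinRels (n : ℕ) : Set (FreeGroup (Fin (n-1) ⊕ Unit)) :=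
  {zF n * zF n} ∪
  {w | ∃ i : Fin (n-1), w = zF n * tF n i * (tF n i * zF n)⁻¹} ∪
  {w | ∃ i : Fin (n-1), w = tF n i * tF n i * (zF n)⁻¹} ∪
  {w | ∃ i j : Fin (n-1), 1 < |(i : ℤ) - (j : ℤ)| ∧ w = tF n i * tF n j * (zF n * tF n j * tF n i)⁻¹} ∪
  {w | ∃ i j : Fin (n-1), (j : ℕ) = (i : ℕ) + 1 ∧
        w = tF n i * tF n j * tF n i * (tF n j * tF n i * tF n j)⁻¹}

/-- The spin extension `S̃ₙ` of the symmetric group, as a presented group. -/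
abbrev SpinSym (n : ℕ) := PresentedGroup (spinRels n)

/-- The central element `z` of `S̃ₙ`. -/
def zt (n : ℕ) : SpinSym n := PresentedGroup.of (Sum.inr ())

/-- The generator `τ̃ᵢ` of `S̃ₙ`. -/
def tt (n : ℕ) (i : Fin (n-1)) : SpinSym n := PresentedGroup.of (Sum.inl i)

/-- `i` as an element of `Fin n`. -/
def finL (n : ℕ) (i : Fin (n-1)) : Fin n := ⟨i, by have := i.2; omega⟩

/-- `i+1` as an element of `Fin n`. -/
def finR (n : ℕ) (i : Fin (n-1)) : Fin n := ⟨(i : ℕ) + 1, by have := i.2; omega⟩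

/-- `τ̃ₖ` for a natural number index, `1` out of range. -/
def ttN (n : ℕ) (k : ℕ) : SpinSym n := if h : k < n - 1 then tt n ⟨k, h⟩ else 1

/-- For `i ≤ j`, the word `τ̃ᵢ·τ̃ᵢ₊₁⋯τ̃ⱼ₋₂·τ̃ⱼ₋₁·τ̃ⱼ₋₂⋯τ̃ᵢ₊₁·τ̃ᵢ` (equal to `1` when `i = j`). -/
def ttilCore (n i j : ℕ) : SpinSym n :=
  (((List.range' i (j - i)) ++ (List.range' i (j - 1 - i)).reverse).map (ttN n)).prod

/-- The lifted transpositions `τ̃_{i,j}`, with `τ̃_{j,i} = z·τ̃_{i,j}` for `i < j`,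
and `τ̃_{k,k} = 1`. -/
def ttil (n i j : ℕ) : SpinSym n := if j < i then zt n * ttilCore n j i else ttilCore n i j

/-!
Each `τ̃ₖ` squares to `z`, and `z² = 1`. The word `τ̃_{i,j}` is a palindrome of odd length, so it is
built from its middle letter `τ̃ⱼ₋₁` by repeatedly passing from `c` to `a * c * a`. If
`a² = c² = z`, then `z` commutes with `a` and `c`, whence `(a * c * a)² = a² * c² * a² = z³ = z`.
Likewise `z = τ̃_{i,j}²` commutes with `τ̃_{i,j}`, so the extra factor in `τ̃_{j,i} = z * τ̃_{i,j}`
contributes only `z² = 1` to the square.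
-/

section SquareRoots

variable {M : Type*} [Monoid M] {z a c : M}

theorem commute_of_mul_self_eq (hc : c * c = z) : Commute c z :=
  hc ▸ (Commute.refl c).mul_right (Commute.refl c)

theorem sandwich_mul_self (hz : z * z = 1) (ha : a * a = z) (hc : c * c = z) :
    a * c * a * (a * c * a) = z := by
  calc a * c * a * (a * c * a) = a * (c * (a * a) * c) * a := by simp only [mul_assoc]
    _ = a * (z * (c * c)) * a := by rw [ha, (commute_of_mul_self_eq hc).eq, mul_assoc z]
    _ = z := by rw [hc, hz, mul_one, ha]

theorem involution_mul_mul_self (hz : z * z = 1) (hc : c * c = z) :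
    z * c * (z * c) = z := by
  rw [(commute_of_mul_self_eq hc).mul_mul_mul_comm, hz, one_mul, hc]

theorem palindrome_prod_mul_self (hz : z * z = 1) (hc : c * c = z) {l : List M}
    (hl : ∀ x ∈ l, x * x = z) :
    (l.prod * c * l.reverse.prod) * (l.prod * c * l.reverse.prod) = z := by
  induction l with
  | nil => simpa using hc
  | cons x l ih =>
    obtain ⟨hx, hl⟩ := List.forall_mem_cons.mp hl
    have peel : (x :: l).prod * c * (x :: l).reverse.prod =
        x * (l.prod * c * l.reverse.prod) * x := by
      simp [mul_assoc]
    rw [peel]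
    exact sandwich_mul_self hz hx (ih hl)

end SquareRoots

theorem zt_mul_self (n : ℕ) : zt n * zt n = 1 :=
  PresentedGroup.one_of_mem (rels := spinRels n) (x := zF n * zF n) (by simp [spinRels])

theorem tt_mul_self (n : ℕ) (i : Fin (n - 1)) : tt n i * tt n i = zt n :=
  PresentedGroup.mk_eq_mk_of_mul_inv_mem (rels := spinRels n) (x := tF n i * tF n i) (y := zF n)
    (Or.inl (Or.inl (Or.inr ⟨i, rfl⟩)))

theorem ttN_mul_self {n k : ℕ} (hk : k < n - 1) : ttN n k * ttN n k = zt n := by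
  rw [ttN, dif_pos hk, tt_mul_self]

theorem ttilCore_eq_palindrome_prod (n : ℕ) {i j : ℕ} (hij : i < j) :
    ttilCore n i j =
      ((List.range' i (j - 1 - i)).map (ttN n)).prod * ttN n (j - 1) *
        ((List.range' i (j - 1 - i)).map (ttN n)).reverse.prod := by
  have hlen : j - i = j - 1 - i + 1 := by omega
  have hmid : i + (j - 1 - i) = j - 1 := by omega
  rw [ttilCore, hlen, List.range'_1_concat, hmid]
  simp only [List.map_append, List.map_reverse, List.map_singleton, List.prod_append,
    List.prod_singleton]

theorem ttilCore_mul_self {n i j : ℕ} (hij : i < j) (hj : j < n) :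
    ttilCore n i j * ttilCore n i j = zt n := by
  have hletters : ∀ x ∈ (List.range' i (j - 1 - i)).map (ttN n), x * x = zt n := by
    refine List.forall_mem_map.mpr fun k hk => ttN_mul_self ?_
    rw [List.mem_range'_1] at hk
    omega
  rw [ttilCore_eq_palindrome_prod n hij]
  exact palindrome_prod_mul_self (zt_mul_self n) (ttN_mul_self (by omega)) hletters

theorem ttil_sq (n : ℕ) (hn : 2 ≤ n) (i j : Fin n) (hij : i ≠ j) :
    ttil n i.val j.val * ttil n i.val j.val = zt n := by
  rw [ttil]
  split_ifs with hji
  · exact involution_mul_mul_self (zt_mul_self n) (ttilCore_mul_self hji i.isLt)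
  · exact ttilCore_mul_self (by omega) j.isLt
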